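/- arXiv:2110.06661 — 4 statements merged into one kernel-verified Lean document; each statement's English description precedes it below -/
import Mathlib

section
/- For all real a > 0 and z > 0, letting β = a²/z², the double integral ∫_{−a}^{a} ∫_{−a}^{a} z·(x² + z²)/(x² + y² + z²)^{5/2} dy dx equals (8/3)·( β/(2(β+1)√(2β+1)) + arctan(β/√(2β+1)) ). -/
open Real

/-!
Both integrals are elementary. With `A = x² + z²`, an antiderivative in `y` of
`z A / (A + y²)^(5/2)` is `z y / (3 (A + y²)^(3/2)) + 2 z y / (3 A √(A + y²))`
(`hasDerivAt_inner`). Its increment over `[-a, a]` is a function of `x` with antiderivative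
`(2 z a / 3) x / ((z² + a²) √(x² + a² + z²)) + (4 / 3) arctan (a x / (z √(x² + a² + z²)))`
(`hasDerivAt_outer`). The latter is odd in `x`, so the double integral is twice its value at `a`,
and `√(2 a² + z²) = z √(2 β + 1)` puts this value in the stated form.
-/

lemma rpow_five_halves {s : ℝ} (hs : 0 < s) : s ^ ((5:ℝ)/2) = √s ^ 5 := by
  rw [Real.sqrt_eq_rpow, ← Real.rpow_natCast, ← Real.rpow_mul hs.le]
  norm_num

lemma hasDerivAt_sqrt_sq_add (c t : ℝ) (h : 0 < t ^ 2 + c) :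
    HasDerivAt (fun t : ℝ => √(t ^ 2 + c)) (t / √(t ^ 2 + c)) t := by
  have h1 : HasDerivAt (fun t : ℝ => t ^ 2 + c) (2 * t) t := by
    simpa using (hasDerivAt_pow 2 t).add_const c
  convert h1.sqrt h.ne' using 1
  field_simp

lemma hasDerivAt_inner (z A y : ℝ) (hA : 0 < A) :
    HasDerivAt (fun y : ℝ => z * y / (3 * √(y ^ 2 + A) ^ 3) + 2 * z * y / (3 * A * √(y ^ 2 + A)))
      (z * A / √(y ^ 2 + A) ^ 5) y := by
  have hp : 0 < y ^ 2 + A := by positivity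
  have hr := hasDerivAt_sqrt_sq_add A y hp
  have hs : 0 < √(y ^ 2 + A) := Real.sqrt_pos.2 hp
  have hq : √(y ^ 2 + A) ^ 2 = y ^ 2 + A := Real.sq_sqrt hp.le
  have h1 := ((hasDerivAt_id y).const_mul z).div ((hr.pow 3).const_mul 3)
    (by simp only [Pi.pow_apply]; positivity)
  have h2 := ((hasDerivAt_id y).const_mul (2 * z)).div (hr.const_mul (3 * A)) (by positivity)
  refine (h1.add h2).congr_deriv ?_
  simp only [id, Pi.pow_apply]
  generalize √(y ^ 2 + A) = r at *
  obtain rfl : A = r ^ 2 - y ^ 2 := by linarith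
  field_simp
  ring

lemma hasDerivAt_outer (a z x : ℝ) (hz : 0 < z) :
    HasDerivAt (fun x : ℝ => 2 * z * a / 3 * (x / ((z ^ 2 + a ^ 2) * √(x ^ 2 + (a ^ 2 + z ^ 2))))
        + 4 / 3 * arctan (a * x / (z * √(x ^ 2 + (a ^ 2 + z ^ 2)))))
      (2 * z * a / (3 * √(x ^ 2 + (a ^ 2 + z ^ 2)) ^ 3)
        + 4 * z * a / (3 * (x ^ 2 + z ^ 2) * √(x ^ 2 + (a ^ 2 + z ^ 2)))) x := by
  have hp : 0 < x ^ 2 + (a ^ 2 + z ^ 2) := by positivity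
  have hr := hasDerivAt_sqrt_sq_add (a ^ 2 + z ^ 2) x hp
  have hs : 0 < √(x ^ 2 + (a ^ 2 + z ^ 2)) := Real.sqrt_pos.2 hp
  have hq : √(x ^ 2 + (a ^ 2 + z ^ 2)) ^ 2 = x ^ 2 + (a ^ 2 + z ^ 2) := Real.sq_sqrt hp.le
  have h1 := ((hasDerivAt_id x).div (hr.const_mul (z ^ 2 + a ^ 2)) (by positivity)).const_mul
    (2 * z * a / 3)
  have h2 :=
    ((((hasDerivAt_id x).const_mul a).div (hr.const_mul z) (by positivity)).arctan).const_mul (4 / 3)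
  refine (h1.add h2).congr_deriv ?_
  simp only [id, Pi.div_apply]
  have hB : 0 < z ^ 2 + a ^ 2 := by positivity
  have hA : 0 < x ^ 2 + z ^ 2 := by positivity
  generalize √(x ^ 2 + (a ^ 2 + z ^ 2)) = r at *
  congr 1
  · field_simp
    linear_combination a * hq
  · have e : 1 + (a * x / (z * r)) ^ 2 = (x ^ 2 + z ^ 2) * (z ^ 2 + a ^ 2) / (z * r) ^ 2 := by
      field_simp
      linear_combination z ^ 2 * hq
    rw [e]
    field_simp
    linear_combination a * hq

theorem stmt_6 (a z : ℝ) (ha : 0 < a) (hz : 0 < z) (β : ℝ) (hβ : β = a^2 / z^2) :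
    (∫ x in (-a)..a, ∫ y in (-a)..a,
        z * (x^2 + z^2) / (x^2 + y^2 + z^2) ^ ((5:ℝ)/2))
    = (8 / 3) * (β / (2 * (β + 1) * Real.sqrt (2 * β + 1))
        + Real.arctan (β / Real.sqrt (2 * β + 1))) := by
  have inner : ∀ x : ℝ, (∫ y in (-a)..a, z * (x^2 + z^2) / (x^2 + y^2 + z^2) ^ ((5:ℝ)/2))
      = 2 * z * a / (3 * √(x ^ 2 + (a ^ 2 + z ^ 2)) ^ 3)
        + 4 * z * a / (3 * (x ^ 2 + z ^ 2) * √(x ^ 2 + (a ^ 2 + z ^ 2))) := by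
    intro x
    have hA : 0 < x ^ 2 + z ^ 2 := by positivity
    have e : ∀ y : ℝ, z * (x^2 + z^2) / (x^2 + y^2 + z^2) ^ ((5:ℝ)/2)
        = z * (x^2 + z^2) / √(y ^ 2 + (x ^ 2 + z ^ 2)) ^ 5 := by
      intro y
      rw [rpow_five_halves (by positivity),
        show x^2 + y^2 + z^2 = y ^ 2 + (x ^ 2 + z ^ 2) by ring]
    simp_rw [e]
    rw [intervalIntegral.integral_eq_sub_of_hasDerivAt
      (fun y _ => hasDerivAt_inner z (x ^ 2 + z ^ 2) y hA)]
    · rw [neg_sq, show a ^ 2 + (x ^ 2 + z ^ 2) = x ^ 2 + (a ^ 2 + z ^ 2) by ring]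
      ring
    · apply Continuous.intervalIntegrable
      exact Continuous.div (by fun_prop) (by fun_prop) (fun y => by positivity)
  simp_rw [inner]
  rw [intervalIntegral.integral_eq_sub_of_hasDerivAt (fun x _ => hasDerivAt_outer a z x hz)]
  · have hβ0 : 0 < 2 * β + 1 := by rw [hβ]; positivity
    have ha2 : a ^ 2 = β * z ^ 2 := by rw [hβ]; field_simp
    have hS : √(a ^ 2 + (a ^ 2 + z ^ 2)) = z * √(2 * β + 1) := by
      rw [show a ^ 2 + (a ^ 2 + z ^ 2) = z ^ 2 * (2 * β + 1) by rw [ha2]; ring,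
        Real.sqrt_mul (by positivity), Real.sqrt_sq hz.le]
    have hs : 0 < √(2 * β + 1) := Real.sqrt_pos.2 hβ0
    have hβ1 : 0 < β + 1 := by rw [hβ]; positivity
    rw [neg_sq, hS, mul_neg, neg_div, neg_div, arctan_neg]
    have e1 : a * a / (z * (z * √(2 * β + 1))) = β / √(2 * β + 1) := by
      rw [← sq, ha2]
      field_simp
    have e2 : 2 * z * a / 3 * (a / ((z ^ 2 + a ^ 2) * (z * √(2 * β + 1))))
        = 4 / 3 * (β / (2 * (β + 1) * √(2 * β + 1))) := by
      rw [show 2 * z * a / 3 * (a / ((z ^ 2 + a ^ 2) * (z * √(2 * β + 1))))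
        = 2 * z * a ^ 2 / (3 * ((z ^ 2 + a ^ 2) * (z * √(2 * β + 1)))) by field_simp, ha2,
        show z ^ 2 + β * z ^ 2 = z ^ 2 * (β + 1) by ring]
      field_simp
      ring
    rw [e1]
    linear_combination 2 * e2
  · apply Continuous.intervalIntegrable
    exact (Continuous.div (by fun_prop) (by fun_prop) (fun x => by positivity)).add
      (Continuous.div (by fun_prop) (by fun_prop) (fun x => by positivity))
end

section
/- Let d > 0 and F > 0. The set of distances z > 0 satisfying the 3 dB condition d·|F − z| ≤ 10·F·z equals the closed interval [ dF/(d + 10F), dF/(d − 10F) ] if 10F < d, and equals the unbounded interval [ dF/(d + 10F), ∞) if 10F ≥ d. -/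
open Set

/-- Removing the absolute value splits the 3 dB condition into two linear constraints on `z`; the
first one already forces `0 < z`. The second one is an upper bound on `z` when `10 * F < d` and is
automatic when `d ≤ 10 * F`. -/
lemma three_dB_iff (d F z : ℝ) (hd : 0 < d) (hF : 0 < F) :
    (0 < z ∧ d * |F - z| ≤ 10 * F * z) ↔
      d * F / (d + 10 * F) ≤ z ∧ z * (d - 10 * F) ≤ d * F := by
  have hs : 0 < d + 10 * F := by positivity
  have habs : d * |F - z| = |d * (F - z)| := by rw [abs_mul, abs_of_pos hd]
  rw [habs, abs_le, div_le_iff₀ hs]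
  constructor
  · rintro ⟨-, h1, h2⟩
    constructor <;> linarith
  · rintro ⟨h1, h2⟩
    have hz : 0 < z := pos_of_mul_pos_left ((mul_pos hd hF).trans_le h1) hs.le
    refine ⟨hz, ?_, ?_⟩ <;> linarith

theorem stmt_8 (d F : ℝ) (hd : 0 < d) (hF : 0 < F) :
    (10 * F < d →
      {z : ℝ | 0 < z ∧ d * |F - z| ≤ 10 * F * z}
        = Set.Icc (d * F / (d + 10 * F)) (d * F / (d - 10 * F)))
    ∧ (d ≤ 10 * F →
      {z : ℝ | 0 < z ∧ d * |F - z| ≤ 10 * F * z}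
        = Set.Ici (d * F / (d + 10 * F))) := by
  constructor
  · intro h
    ext z
    rw [mem_ofPred_eq, three_dB_iff d F z hd hF, mem_Icc, le_div_iff₀ (sub_pos.2 h)]
  · intro h
    ext z
    rw [mem_ofPred_eq, three_dB_iff d F z hd hF, mem_Ici, and_iff_left_iff_imp]
    intro hz
    have hz0 : 0 ≤ z := le_trans (by positivity) hz
    exact (mul_nonpos_of_nonneg_of_nonpos hz0 (sub_nonpos.2 h)).trans (by positivity)
end

section
/- The function A(x) = (C(√x)² + S(√x)²)²/x², where C(t) = ∫₀ᵗ cos(πs²/2) ds and S(t) = ∫₀ᵗ sin(πs²/2) ds are the Fresnel integrals, is strictly decreasing on the interval (0, 2]. -/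
/-!
Substituting `s = √x u` in the Fresnel integrals gives
`(C(√x)² + S(√x)²) / x = |∫₀¹ exp(iπxu²/2) du|² = ∫₀¹ ∫₀¹ cos(πx(u² - v²)/2) dv du`.
For `0 < x ≤ 2` the angle satisfies `|πx(u² - v²)/2| ≤ π` on the unit square, and `cos` is even and
strictly decreasing on `[0, π]`. So the integrand decreases as `x` grows, strictly off the diagonal
`u = v`, and hence so does the double integral (`gain_strictAnti`). Since it is also nonnegative,
its square is strictly decreasing.
-/

open Real Set

/-- Fresnel cosine integral `C(t) = ∫₀ᵗ cos(π s²/2) ds`. -/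
noncomputable def fresnelC (t : ℝ) : ℝ := ∫ s in (0:ℝ)..t, Real.cos (Real.pi * s^2 / 2)

/-- Fresnel sine integral `S(t) = ∫₀ᵗ sin(π s²/2) ds`. -/
noncomputable def fresnelS (t : ℝ) : ℝ := ∫ s in (0:ℝ)..t, Real.sin (Real.pi * s^2 / 2)

/-- The real part of `∫₀¹ exp(iπxu²/2) du`. -/
noncomputable def unitC (x : ℝ) : ℝ := ∫ u in (0:ℝ)..1, Real.cos (Real.pi * x * u^2 / 2)

/-- The imaginary part of `∫₀¹ exp(iπxu²/2) du`. -/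
noncomputable def unitS (x : ℝ) : ℝ := ∫ u in (0:ℝ)..1, Real.sin (Real.pi * x * u^2 / 2)

lemma fresnelC_sqrt {x : ℝ} (hx : 0 < x) : fresnelC (√x) = √x * unitC x := by
  have h := intervalIntegral.mul_integral_comp_mul_left (a := 0) (b := 1)
    (f := fun s => Real.cos (Real.pi * s^2 / 2)) (√x)
  simp only [mul_zero, mul_one, mul_pow, Real.sq_sqrt hx.le, ← mul_assoc] at h
  exact h.symm

lemma fresnelS_sqrt {x : ℝ} (hx : 0 < x) : fresnelS (√x) = √x * unitS x := by
  have h := intervalIntegral.mul_integral_comp_mul_left (a := 0) (b := 1)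
    (f := fun s => Real.sin (Real.pi * s^2 / 2)) (√x)
  simp only [mul_zero, mul_one, mul_pow, Real.sq_sqrt hx.le, ← mul_assoc] at h
  exact h.symm

/-- The inner integral of the double-integral representation, by the cosine subtraction formula. -/
lemma inner_eq (x u : ℝ) :
    ∫ v in (0:ℝ)..1, Real.cos (Real.pi * x * (u^2 - v^2) / 2) =
      Real.cos (Real.pi * x * u^2 / 2) * unitC x + Real.sin (Real.pi * x * u^2 / 2) * unitS x := by
  unfold unitC unitS
  rw [← intervalIntegral.integral_const_mul, ← intervalIntegral.integral_const_mul,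
    ← intervalIntegral.integral_add]
  · congr 1 with v
    rw [← Real.cos_sub]
    congr 1
    ring
  · exact Continuous.intervalIntegrable (by fun_prop) _ _
  · exact Continuous.intervalIntegrable (by fun_prop) _ _

lemma outer_eq (x : ℝ) :
    ∫ u in (0:ℝ)..1,
      (Real.cos (Real.pi * x * u^2 / 2) * unitC x + Real.sin (Real.pi * x * u^2 / 2) * unitS x) =
      unitC x ^ 2 + unitS x ^ 2 := by
  rw [intervalIntegral.integral_add, intervalIntegral.integral_mul_const,
    intervalIntegral.integral_mul_const, ← unitC, ← unitS, sq, sq]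
  · exact Continuous.intervalIntegrable (by fun_prop) _ _
  · exact Continuous.intervalIntegrable (by fun_prop) _ _

lemma cos_lt {x y d : ℝ} (hx : 0 < x) (hxy : x < y) (hy : y ≤ 2) (hd : d ≠ 0) (hd1 : |d| ≤ 1) :
    Real.cos (Real.pi * y * d / 2) < Real.cos (Real.pi * x * d / 2) := by
  have hd0 : 0 < |d| := abs_pos.mpr hd
  have abs_form : ∀ z : ℝ, 0 < z →
      Real.cos (Real.pi * z * d / 2) = Real.cos (Real.pi * (z * |d| / 2)) := by
    intro z hz
    rw [← Real.cos_abs, abs_div, abs_mul, abs_mul, abs_of_pos Real.pi_pos, abs_of_pos hz,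
      abs_of_pos (two_pos : (0:ℝ) < 2)]
    congr 1
    ring
  rw [abs_form x hx, abs_form y (hx.trans hxy)]
  have hyd : y * |d| ≤ 2 := by nlinarith
  apply Real.cos_lt_cos_of_nonneg_of_le_pi
  · positivity
  · nlinarith [Real.pi_pos]
  · gcongr

lemma cos_le {x y d : ℝ} (hx : 0 < x) (hxy : x < y) (hy : y ≤ 2) (hd1 : |d| ≤ 1) :
    Real.cos (Real.pi * y * d / 2) ≤ Real.cos (Real.pi * x * d / 2) := by
  rcases eq_or_ne d 0 with rfl | hd
  · simp
  · exact (cos_lt hx hxy hy hd hd1).le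

lemma abs_sq_sub_sq_le {u v : ℝ} (hu : u ∈ Icc (0:ℝ) 1) (hv : v ∈ Icc (0:ℝ) 1) :
    |u^2 - v^2| ≤ 1 := by
  obtain ⟨hu0, hu1⟩ := hu
  obtain ⟨hv0, hv1⟩ := hv
  rw [abs_le]
  constructor <;> nlinarith

lemma inner_lt {x y u : ℝ} (hx : 0 < x) (hxy : x < y) (hy : y ≤ 2) (hu : u ∈ Icc (0:ℝ) 1) :
    ∫ v in (0:ℝ)..1, Real.cos (Real.pi * y * (u^2 - v^2) / 2) <
      ∫ v in (0:ℝ)..1, Real.cos (Real.pi * x * (u^2 - v^2) / 2) := by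
  -- At least one endpoint `v ∈ {0, 1}` is off the diagonal.
  obtain ⟨v, hv, huv⟩ : ∃ v ∈ Icc (0:ℝ) 1, u^2 - v^2 ≠ 0 := by
    rcases eq_or_ne u 0 with rfl | h
    · exact ⟨1, by simp, by norm_num⟩
    · exact ⟨0, by simp, by simpa using h⟩
  refine intervalIntegral.integral_lt_integral_of_continuousOn_of_le_of_exists_lt one_pos
    (Continuous.continuousOn (by fun_prop)) (Continuous.continuousOn (by fun_prop)) ?_ ?_
  · intro w hw
    exact cos_le hx hxy hy (abs_sq_sub_sq_le hu (Ioc_subset_Icc_self hw))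
  · exact ⟨v, hv, cos_lt hx hxy hy huv (abs_sq_sub_sq_le hu hv)⟩

lemma gain_strictAnti {x y : ℝ} (hx : 0 < x) (hxy : x < y) (hy : y ≤ 2) :
    unitC y ^ 2 + unitS y ^ 2 < unitC x ^ 2 + unitS x ^ 2 := by
  rw [← outer_eq, ← outer_eq]
  have key : ∀ u ∈ Icc (0:ℝ) 1,
      Real.cos (Real.pi * y * u^2 / 2) * unitC y + Real.sin (Real.pi * y * u^2 / 2) * unitS y <
      Real.cos (Real.pi * x * u^2 / 2) * unitC x + Real.sin (Real.pi * x * u^2 / 2) * unitS x := by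
    intro u hu
    rw [← inner_eq, ← inner_eq]
    exact inner_lt hx hxy hy hu
  refine intervalIntegral.integral_lt_integral_of_continuousOn_of_le_of_exists_lt one_pos
    (Continuous.continuousOn (by fun_prop)) (Continuous.continuousOn (by fun_prop)) ?_ ?_
  · exact fun u hu => (key u (Ioc_subset_Icc_self hu)).le
  · exact ⟨0, by simp, key 0 (by simp)⟩

lemma gain_eq {x : ℝ} (hx : 0 < x) :
    ((fresnelC (√x))^2 + (fresnelS (√x))^2)^2 / x^2 = (unitC x ^ 2 + unitS x ^ 2) ^ 2 := by
  rw [fresnelC_sqrt hx, fresnelS_sqrt hx, mul_pow, mul_pow, Real.sq_sqrt hx.le]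
  field_simp

theorem stmt_13 :
    StrictAntiOn
      (fun x : ℝ =>
        ((fresnelC (Real.sqrt x))^2 + (fresnelS (Real.sqrt x))^2)^2 / x^2)
      (Set.Ioc 0 2) := by
  intro x hx y hy hxy
  simp only [gain_eq hx.1, gain_eq hy.1]
  exact pow_lt_pow_left₀ (gain_strictAnti hx.1 hxy hy.2) (by positivity) two_ne_zero
end

section
/- The value A(5/4) = (C(√(5/4))² + S(√(5/4))²)²/(5/4)², with the Fresnel integrals C(t) = ∫₀ᵗ cos(πs²/2) ds and S(t) = ∫₀ᵗ sin(πs²/2) ds, lies in the open interval (0.49, 0.51). -/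
/-!
Write `y = 5π/8`. Substituting `s = √(5/4) u` gives `C(√(5/4)) = √(5/4) c` and
`S(√(5/4)) = √(5/4) s` with `c = ∫₀¹ cos (y u²) du` and `s = ∫₀¹ sin (y u²) du`, so the quantity
to bound is `(c² + s²)²`, and it suffices that `0.7 < c² + s² < 0.7141`. On `[0, ∞)` the Taylor
polynomials of `cos` and `sin` at `0` bound these functions alternately from above and below
(`cos_le_taylor`, `taylor_le_cos`, `sin_le_taylor`, `taylor_le_sin`). Integrating these bounds
gives rational polynomials in `y` enclosing `c` and `s`, which `3.1415 < π < 3.1416` evaluates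
precisely enough.
-/

open Real Set

theorem nonneg_of_hasDerivAt {f f' : ℝ → ℝ} (h0 : f 0 = 0) (hf : ∀ x, HasDerivAt f (f' x) x)
    (hf' : ∀ x, 0 ≤ x → 0 ≤ f' x) {x : ℝ} (hx : 0 ≤ x) : 0 ≤ f x := by
  have hm : MonotoneOn f (Set.Ici 0) := by
    refine monotoneOn_of_deriv_nonneg (convex_Ici 0)
      (fun x _ => (hf x).continuousAt.continuousWithinAt)
      (fun x _ => (hf x).differentiableAt.differentiableWithinAt) ?_
    intro x hx
    rw [(hf x).deriv]
    rw [interior_Ici] at hx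
    exact hf' x (le_of_lt hx)
  simpa [h0] using hm Set.self_mem_Ici hx hx

theorem hasDerivAt_monomial (n : ℕ) (a x : ℝ) :
    HasDerivAt (fun x : ℝ => x ^ n / a) (n * x ^ (n - 1) / a) x :=
  (hasDerivAt_pow n x).div_const a

theorem cos_le_taylor {x : ℝ} (hx : 0 ≤ x) : Real.cos x ≤ 1 - x ^ 2 / 2 + x ^ 4 / 24 := by
  have := nonneg_of_hasDerivAt (f := fun x => 1 - x ^ 2 / 2 + x ^ 4 / 24 - Real.cos x) (by simp)
    (fun x => ((((hasDerivAt_monomial 2 2 x).const_sub 1).add (hasDerivAt_monomial 4 24 x)).sub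
      (Real.hasDerivAt_cos x)))
    (fun x hx => by
      have := Real.sin_ge_sub_cube hx
      norm_num
      linarith) hx
  linarith

theorem sin_le_taylor {x : ℝ} (hx : 0 ≤ x) : Real.sin x ≤ x - x ^ 3 / 6 + x ^ 5 / 120 := by
  have := nonneg_of_hasDerivAt (f := fun x => x - x ^ 3 / 6 + x ^ 5 / 120 - Real.sin x) (by simp)
    (fun x => ((((hasDerivAt_id' x).sub (hasDerivAt_monomial 3 6 x)).add
      (hasDerivAt_monomial 5 120 x)).sub (Real.hasDerivAt_sin x)))
    (fun x hx => by
      have := cos_le_taylor hx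
      norm_num
      linarith) hx
  linarith

theorem taylor_le_cos {x : ℝ} (hx : 0 ≤ x) :
    1 - x ^ 2 / 2 + x ^ 4 / 24 - x ^ 6 / 720 ≤ Real.cos x := by
  have := nonneg_of_hasDerivAt
    (f := fun x => Real.cos x - (1 - x ^ 2 / 2 + x ^ 4 / 24 - x ^ 6 / 720)) (by simp)
    (fun x => (Real.hasDerivAt_cos x).sub ((((hasDerivAt_monomial 2 2 x).const_sub 1).add
      (hasDerivAt_monomial 4 24 x)).sub (hasDerivAt_monomial 6 720 x)))
    (fun x hx => by
      have := sin_le_taylor hx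
      norm_num
      linarith) hx
  linarith

theorem taylor_le_sin {x : ℝ} (hx : 0 ≤ x) :
    x - x ^ 3 / 6 + x ^ 5 / 120 - x ^ 7 / 5040 ≤ Real.sin x := by
  have := nonneg_of_hasDerivAt
    (f := fun x => Real.sin x - (x - x ^ 3 / 6 + x ^ 5 / 120 - x ^ 7 / 5040)) (by simp)
    (fun x => (Real.hasDerivAt_sin x).sub ((((hasDerivAt_id' x).sub
      (hasDerivAt_monomial 3 6 x)).add (hasDerivAt_monomial 5 120 x)).sub
      (hasDerivAt_monomial 7 5040 x)))
    (fun x hx => by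
      have := taylor_le_cos hx
      norm_num
      linarith) hx
  linarith

/-- Each Fresnel integrand is `g (π s² / 2)` with `g = cos` or `g = sin`; rescaling moves the
upper limit to `1`. -/
theorem integral_rescale (g : ℝ → ℝ) :
    ∫ s in (0:ℝ)..√(5/4), g (Real.pi * s ^ 2 / 2)
      = √(5/4) * ∫ u in (0:ℝ)..1, g (5 * Real.pi / 8 * u ^ 2) := by
  have h := intervalIntegral.mul_integral_comp_mul_left (a := 0) (b := 1)
    (f := fun s => g (Real.pi * s ^ 2 / 2)) (√(5/4))
  rw [mul_zero, mul_one] at h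
  rw [← h]
  congr 2
  ext u
  rw [mul_pow, Real.sq_sqrt (by norm_num)]
  ring_nf

theorem integral_even_poly (a b d e : ℝ) :
    ∫ u in (0:ℝ)..1, (a + b * u ^ 4 + d * u ^ 8 + e * u ^ 12) = a + b / 5 + d / 9 + e / 13 := by
  have h : ∀ x ∈ Set.uIcc (0:ℝ) 1, HasDerivAt
      (fun u : ℝ => a * u + b * (u ^ 5 / 5) + d * (u ^ 9 / 9) + e * (u ^ 13 / 13))
      (a + b * x ^ 4 + d * x ^ 8 + e * x ^ 12) x := fun x _ => by
    refine HasDerivAt.congr_deriv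
      (((((hasDerivAt_id' x).const_mul a).add ((hasDerivAt_monomial 5 5 x).const_mul b)).add
      ((hasDerivAt_monomial 9 9 x).const_mul d)).add
      ((hasDerivAt_monomial 13 13 x).const_mul e)) ?_
    norm_num
  rw [intervalIntegral.integral_eq_sub_of_hasDerivAt h
    (Continuous.intervalIntegrable (by fun_prop) _ _)]
  ring

theorem integral_odd_poly (a b d e : ℝ) :
    ∫ u in (0:ℝ)..1, (a * u ^ 2 + b * u ^ 6 + d * u ^ 10 + e * u ^ 14)
      = a / 3 + b / 7 + d / 11 + e / 15 := by
  have h : ∀ x ∈ Set.uIcc (0:ℝ) 1, HasDerivAt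
      (fun u : ℝ => a * (u ^ 3 / 3) + b * (u ^ 7 / 7) + d * (u ^ 11 / 11) + e * (u ^ 15 / 15))
      (a * x ^ 2 + b * x ^ 6 + d * x ^ 10 + e * x ^ 14) x := fun x _ => by
    refine HasDerivAt.congr_deriv
      (((((hasDerivAt_monomial 3 3 x).const_mul a).add
      ((hasDerivAt_monomial 7 7 x).const_mul b)).add
      ((hasDerivAt_monomial 11 11 x).const_mul d)).add
      ((hasDerivAt_monomial 15 15 x).const_mul e)) ?_
    norm_num
  rw [intervalIntegral.integral_eq_sub_of_hasDerivAt h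
    (Continuous.intervalIntegrable (by fun_prop) _ _)]
  ring

theorem integral_cos_mem {y : ℝ} (hy : 0 ≤ y) :
    (∫ u in (0:ℝ)..1, Real.cos (y * u ^ 2)) ∈
      Set.Icc (1 - y ^ 2 / 10 + y ^ 4 / 216 - y ^ 6 / 9360) (1 - y ^ 2 / 10 + y ^ 4 / 216) := by
  constructor
  · have := integral_even_poly 1 (-y ^ 2 / 2) (y ^ 4 / 24) (-y ^ 6 / 720)
    calc _ = _ := by rw [eq_comm, this]; ring
      _ ≤ _ := intervalIntegral.integral_mono_on zero_le_one
        (Continuous.intervalIntegrable (by fun_prop) _ _)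
        (Continuous.intervalIntegrable (by fun_prop) _ _) fun u _ => by
          have := taylor_le_cos (x := y * u ^ 2) (by positivity)
          ring_nf at this ⊢
          exact this
  · have := integral_even_poly 1 (-y ^ 2 / 2) (y ^ 4 / 24) 0
    calc _ ≤ _ := intervalIntegral.integral_mono_on zero_le_one
          (Continuous.intervalIntegrable (by fun_prop) _ _)
          (Continuous.intervalIntegrable (by fun_prop) _ _) fun u _ => by
            have := cos_le_taylor (x := y * u ^ 2) (by positivity)
            ring_nf at this ⊢
            exact this
      _ = _ := this
      _ = _ := by ring

theorem integral_sin_mem {y : ℝ} (hy : 0 ≤ y) :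
    (∫ u in (0:ℝ)..1, Real.sin (y * u ^ 2)) ∈
      Set.Icc (y / 3 - y ^ 3 / 42 + y ^ 5 / 1320 - y ^ 7 / 75600)
        (y / 3 - y ^ 3 / 42 + y ^ 5 / 1320) := by
  constructor
  · have := integral_odd_poly y (-y ^ 3 / 6) (y ^ 5 / 120) (-y ^ 7 / 5040)
    calc _ = _ := by rw [eq_comm, this]; ring
      _ ≤ _ := intervalIntegral.integral_mono_on zero_le_one
        (Continuous.intervalIntegrable (by fun_prop) _ _)
        (Continuous.intervalIntegrable (by fun_prop) _ _) fun u _ => by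
          have := taylor_le_sin (x := y * u ^ 2) (by positivity)
          ring_nf at this ⊢
          exact this
  · have := integral_odd_poly y (-y ^ 3 / 6) (y ^ 5 / 120) 0
    calc _ ≤ _ := intervalIntegral.integral_mono_on zero_le_one
          (Continuous.intervalIntegrable (by fun_prop) _ _)
          (Continuous.intervalIntegrable (by fun_prop) _ _) fun u _ => by
            have := sin_le_taylor (x := y * u ^ 2) (by positivity)
            ring_nf at this ⊢
            exact this
      _ = _ := this
      _ = _ := by ring

theorem stmt_14 :
    ((fresnelC (Real.sqrt (5/4)))^2 + (fresnelS (Real.sqrt (5/4)))^2)^2 / (5/4 : ℝ)^2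
      ∈ Set.Ioo (0.49 : ℝ) (0.51 : ℝ) := by
  unfold fresnelC fresnelS
  rw [integral_rescale Real.cos, integral_rescale Real.sin]
  have hlo : 1.9634 ≤ 5 * Real.pi / 8 := by linarith [Real.pi_gt_d4]
  have hhi : 5 * Real.pi / 8 ≤ 1.9635 := by linarith [Real.pi_lt_d4]
  generalize 5 * Real.pi / 8 = y at hlo hhi
  have hy : 0 ≤ y := by linarith
  obtain ⟨hc1, hc2⟩ := integral_cos_mem hy
  obtain ⟨hs1, hs2⟩ := integral_sin_mem hy
  generalize (∫ u in (0:ℝ)..1, Real.cos (y * u ^ 2)) = c at *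
  generalize (∫ u in (0:ℝ)..1, Real.sin (y * u ^ 2)) = s at *
  have lo (n : ℕ) : (1.9634 : ℝ) ^ n ≤ y ^ n := pow_le_pow_left₀ (by norm_num) hlo n
  have hi (n : ℕ) : y ^ n ≤ (1.9635 : ℝ) ^ n := pow_le_pow_left₀ hy hhi n
  have l2 := lo 2
  have l3 := lo 3
  have l4 := lo 4
  have l5 := lo 5
  have u2 := hi 2
  have u3 := hi 3
  have u4 := hi 4
  have u5 := hi 5
  have u6 := hi 6
  have u7 := hi 7
  norm_num at l2 l3 l4 l5 u2 u3 u4 u5 u6 u7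
  have c1 : 0.677 ≤ c := by linarith
  have c2 : c ≤ 0.6834 := by linarith
  have s1 : 0.4947 ≤ s := by linarith
  have s2 : s ≤ 0.4965 := by linarith
  have hlow : 0.7 < c ^ 2 + s ^ 2 := by nlinarith
  have hupp : c ^ 2 + s ^ 2 < 0.7141 := by nlinarith
  have key : ((√(5/4) * c) ^ 2 + (√(5/4) * s) ^ 2) ^ 2 / (5/4 : ℝ) ^ 2 = (c ^ 2 + s ^ 2) ^ 2 := by
    rw [mul_pow, mul_pow, Real.sq_sqrt (by norm_num)]
    ring
  rw [key]
  constructor <;> nlinarith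
end
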